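/- Variational characterization of the rate (core computation in the proof of Theorem 1): Define e(u) = (u·a_i·v_i − 1)^2 + ∑_{j≠i} (u·a_j·v_j)^2 + u^2·σ^2 and SINR = (a_i·v_i)^2 / (∑_{j≠i} (a_j·v_j)^2 + σ^2). Then inf over u ∈ ℝ and w > 0 of (w·e(u) − ln w) equals 1 − ln(1 + SINR), and the infimum is attained exactly at u* = (a_i·v_i)/J with J = ∑_{j=1}^D (a_j·v_j)^2 + σ^2 and w* = 1/e(u*). Equivalently, sup over u ∈ ℝ, w > 0 of (ln w − w·e(u) + 1) = ln(1 + SINR). -/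

import Mathlib

/-!
Completing the square shows that the mean-square error `e` has a unique minimizer `u*`, with
minimum value `(1 + SINR)⁻¹`. For a fixed error `x > 0`, the inequality `log t ≤ t - 1` at
`t = w * x` shows that `w * x - log w` is at least `1 + log x`, with equality only for `w = x⁻¹`.
As `1 + log x` is strictly increasing in `x`, the joint minimum over `u` and `w` is
`1 + log (e u*) = 1 - log (1 + SINR)`.
-/

section WeightedError

theorem log_eq_sub_one_iff {t : ℝ} (ht : 0 < t) : Real.log t = t - 1 ↔ t = 1 := by
  refine ⟨fun h => ?_, fun h => by simp [h]⟩
  by_contra hne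
  exact (Real.log_lt_sub_one_of_pos ht hne).ne h

variable {x y w : ℝ}

theorem one_add_log_le_mul_sub_log (hx : 0 < x) (hw : 0 < w) :
    1 + Real.log x ≤ w * x - Real.log w := by
  have h := Real.log_le_sub_one_of_pos (mul_pos hw hx)
  rw [Real.log_mul hw.ne' hx.ne'] at h
  linarith

theorem mul_sub_log_eq_one_add_log_iff (hx : 0 < x) (hw : 0 < w) :
    w * x - Real.log w = 1 + Real.log x ↔ w = x⁻¹ := by
  rw [← mul_eq_one_iff_eq_inv₀ hx.ne', ← log_eq_sub_one_iff (mul_pos hw hx),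
    Real.log_mul hw.ne' hx.ne']
  constructor <;> intro h <;> linarith

theorem one_add_log_le_mul_sub_log_of_le (hx : 0 < x) (hxy : x ≤ y) (hw : 0 < w) :
    1 + Real.log x ≤ w * y - Real.log w :=
  calc
    1 + Real.log x ≤ 1 + Real.log y := by gcongr
    _ ≤ w * y - Real.log w := one_add_log_le_mul_sub_log (hx.trans_le hxy) hw

theorem mul_sub_log_eq_one_add_log_iff_of_le (hx : 0 < x) (hxy : x ≤ y) (hw : 0 < w) :
    w * y - Real.log w = 1 + Real.log x ↔ y = x ∧ w = x⁻¹ := by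
  constructor
  · intro h
    have hyx : y ≤ x := by
      rw [← Real.log_le_log_iff (hx.trans_le hxy) hx]
      linarith [one_add_log_le_mul_sub_log (hx.trans_le hxy) hw]
    obtain rfl := hyx.antisymm hxy
    exact ⟨rfl, (mul_sub_log_eq_one_add_log_iff hx hw).mp h⟩
  · rintro ⟨rfl, hwy⟩
    exact (mul_sub_log_eq_one_add_log_iff hx hw).mpr hwy

variable {α : Type*} {e : α → ℝ} {u₀ : α}

theorem isLeast_mul_sub_log (hpos : 0 < e u₀) (hmin : ∀ u, e u₀ ≤ e u) :
    IsLeast {x : ℝ | ∃ u w, 0 < w ∧ x = w * e u - Real.log w} (1 + Real.log (e u₀)) := by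
  have hw : 0 < (e u₀)⁻¹ := inv_pos.mpr hpos
  refine ⟨⟨u₀, (e u₀)⁻¹, hw, ((mul_sub_log_eq_one_add_log_iff hpos hw).mpr rfl).symm⟩, ?_⟩
  rintro _ ⟨u, w, hw, rfl⟩
  exact one_add_log_le_mul_sub_log_of_le hpos (hmin u) hw

theorem isGreatest_log_sub_mul_add_one (hpos : 0 < e u₀) (hmin : ∀ u, e u₀ ≤ e u) :
    IsGreatest {x : ℝ | ∃ u w, 0 < w ∧ x = Real.log w - w * e u + 1} (-Real.log (e u₀)) := by
  obtain ⟨⟨u, w, hw, hattained⟩, hlower⟩ := isLeast_mul_sub_log hpos hmin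
  refine ⟨⟨u, w, hw, by linarith⟩, ?_⟩
  rintro _ ⟨u, w, hw, rfl⟩
  linarith [hlower ⟨u, w, hw, rfl⟩]

end WeightedError

/-- The mean-square error `𝔼 |u * (g * s + n) - s| ^ 2` of the linear receiver `u`, for a
unit-power symbol `s` sent with direct gain `g` and an uncorrelated disturbance `n` of power `N`. -/
def linearMSE (g N u : ℝ) : ℝ :=
  (u * g - 1) ^ 2 + u ^ 2 * N

/-- The linear receiver of least mean-square error `linearMSE g N`: the direct gain `g` divided by
the total received power `g ^ 2 + N`. -/
noncomputable def mmseReceiver (g N : ℝ) : ℝ :=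
  g / (g ^ 2 + N)

section LinearReceiver

variable {g N : ℝ}

theorem linearMSE_eq_inv_add_mul_sq (hN : 0 < N) (u : ℝ) :
    linearMSE g N u = (1 + g ^ 2 / N)⁻¹ + (g ^ 2 + N) * (u - mmseReceiver g N) ^ 2 := by
  have hJ : g ^ 2 + N ≠ 0 := by positivity
  have hinv : (1 + g ^ 2 / N)⁻¹ = N / (g ^ 2 + N) := by
    field_simp
    ring
  rw [linearMSE, mmseReceiver, hinv]
  field_simp
  ring

theorem linearMSE_mmseReceiver (hN : 0 < N) :
    linearMSE g N (mmseReceiver g N) = (1 + g ^ 2 / N)⁻¹ := by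
  simp [linearMSE_eq_inv_add_mul_sq hN]

theorem linearMSE_mmseReceiver_pos (hN : 0 < N) : 0 < linearMSE g N (mmseReceiver g N) := by
  rw [linearMSE_mmseReceiver hN]
  positivity

theorem linearMSE_mmseReceiver_le (hN : 0 < N) (u : ℝ) :
    linearMSE g N (mmseReceiver g N) ≤ linearMSE g N u := by
  rw [linearMSE_mmseReceiver hN, linearMSE_eq_inv_add_mul_sq hN]
  exact le_add_of_nonneg_right (by positivity)

theorem linearMSE_eq_linearMSE_mmseReceiver_iff (hN : 0 < N) (u : ℝ) :
    linearMSE g N u = linearMSE g N (mmseReceiver g N) ↔ u = mmseReceiver g N := by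
  have hJ : g ^ 2 + N ≠ 0 := by positivity
  rw [linearMSE_mmseReceiver hN, linearMSE_eq_inv_add_mul_sq hN]
  simp [hJ, sub_eq_zero]

theorem log_one_add_div_eq_neg_log_linearMSE (hN : 0 < N) :
    Real.log (1 + g ^ 2 / N) = -Real.log (linearMSE g N (mmseReceiver g N)) := by
  rw [linearMSE_mmseReceiver hN, Real.log_inv, neg_neg]

end LinearReceiver

theorem sq_add_sum_add_eq_linearMSE {ι : Type*} (s : Finset ι) (i : ι) (a v : ι → ℝ) (σ u : ℝ) :
    (u * a i * v i - 1) ^ 2 + (∑ j ∈ s, (u * a j * v j) ^ 2) + u ^ 2 * σ ^ 2 =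
      linearMSE (a i * v i) ((∑ j ∈ s, (a j * v j) ^ 2) + σ ^ 2) u := by
  simp only [linearMSE, mul_assoc, mul_pow u, ← Finset.mul_sum]
  ring

theorem rate_variational_characterization_general {ι : Type*} [Fintype ι] [DecidableEq ι] (i : ι)
    (a v : ι → ℝ) (σ : ℝ)
    (hN : 0 < (∑ j ∈ Finset.univ.erase i, (a j * v j) ^ 2) + σ ^ 2)
    (e : ℝ → ℝ)
    (he : ∀ u, e u = (u * a i * v i - 1) ^ 2 +
      (∑ j ∈ Finset.univ.erase i, (u * a j * v j) ^ 2) + u ^ 2 * σ ^ 2)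
    (J : ℝ) (hJ : J = (∑ j, (a j * v j) ^ 2) + σ ^ 2)
    (ustar : ℝ) (hustar : ustar = a i * v i / J)
    (wstar : ℝ) (hwstar : wstar = 1 / e ustar)
    (SINR : ℝ)
    (hSINR : SINR = (a i * v i) ^ 2 /
      ((∑ j ∈ Finset.univ.erase i, (a j * v j) ^ 2) + σ ^ 2)) :
    IsLeast {x : ℝ | ∃ u w : ℝ, 0 < w ∧ x = w * e u - Real.log w}
      (1 - Real.log (1 + SINR)) ∧
    (∀ u w : ℝ, 0 < w →
      (w * e u - Real.log w = 1 - Real.log (1 + SINR) ↔ u = ustar ∧ w = wstar)) ∧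
    IsGreatest {x : ℝ | ∃ u w : ℝ, 0 < w ∧ x = Real.log w - w * e u + 1}
      (Real.log (1 + SINR)) := by
  obtain rfl : e = linearMSE (a i * v i) _ :=
    funext fun u => (he u).trans (sq_add_sum_add_eq_linearMSE _ i a v σ u)
  rw [← Finset.add_sum_erase _ _ (Finset.mem_univ i), add_assoc] at hJ
  rw [hJ] at hustar
  generalize (∑ j ∈ Finset.univ.erase i, (a j * v j) ^ 2) + σ ^ 2 = N at *
  generalize a i * v i = g at *
  obtain rfl : ustar = mmseReceiver g N := hustar
  have hpos := linearMSE_mmseReceiver_pos (g := g) hN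
  have hmin := linearMSE_mmseReceiver_le (g := g) hN
  rw [hSINR, log_one_add_div_eq_neg_log_linearMSE hN, sub_neg_eq_add, hwstar, one_div]
  refine ⟨isLeast_mul_sub_log hpos hmin, fun u w hw => ?_,
    isGreatest_log_sub_mul_add_one hpos hmin⟩
  rw [mul_sub_log_eq_one_add_log_iff_of_le hpos (hmin u) hw,
    linearMSE_eq_linearMSE_mmseReceiver_iff hN]

/-- Variational characterization of the rate (core computation in the proof of
Theorem 1): `inf_{u ∈ ℝ, w > 0} (w·e(u) − ln w) = 1 − ln(1 + SINR)`, attained exactly at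
`u* = a_i v_i / J` and `w* = 1/e(u*)`; equivalently
`sup_{u ∈ ℝ, w > 0} (ln w − w·e(u) + 1) = ln(1 + SINR)`. -/
theorem rate_variational_characterization
    (D : ℕ) (hD : 0 < D) (i : Fin D)
    (a : Fin D → ℝ) (ha : ∀ j, 0 ≤ a j) (v : Fin D → ℝ)
    (σ : ℝ) (hσ : 0 < σ)
    (e : ℝ → ℝ)
    (he : ∀ u, e u = (u * a i * v i - 1) ^ 2 +
      (∑ j ∈ Finset.univ.erase i, (u * a j * v j) ^ 2) + u ^ 2 * σ ^ 2)
    (J : ℝ) (hJ : J = (∑ j, (a j * v j) ^ 2) + σ ^ 2)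
    (ustar : ℝ) (hustar : ustar = a i * v i / J)
    (wstar : ℝ) (hwstar : wstar = 1 / e ustar)
    (SINR : ℝ)
    (hSINR : SINR = (a i * v i) ^ 2 /
      ((∑ j ∈ Finset.univ.erase i, (a j * v j) ^ 2) + σ ^ 2)) :
    IsLeast {x : ℝ | ∃ u w : ℝ, 0 < w ∧ x = w * e u - Real.log w}
      (1 - Real.log (1 + SINR)) ∧
    (∀ u w : ℝ, 0 < w →
      (w * e u - Real.log w = 1 - Real.log (1 + SINR) ↔ u = ustar ∧ w = wstar)) ∧
    IsGreatest {x : ℝ | ∃ u w : ℝ, 0 < w ∧ x = Real.log w - w * e u + 1}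
      (Real.log (1 + SINR)) := by
  exact rate_variational_characterization_general i a v σ (by positivity) e he J hJ ustar hustar
    wstar hwstar SINR hSINR
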